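/- Let (A,m) be a free multiarrangement in K^ℓ with a locally heavy hyperplane H_0 = ker(α_0), m_0 = m(H_0), and homogeneous basis θ_1,...,θ_ℓ of D(A,m) with degrees d_1,...,d_ℓ. Then there exists an index j with d_j = m_0 and, after rescaling, θ_j(α_0) = α_0^{m_0}. -/

import Mathlib

open scoped Classical
open MvPolynomial

namespace ArrPaper

variable {K : Type*} [Field K] {ℓ : ℕ}

/-- The coordinate ring `S = K[x₁,…,x_ℓ]`. -/
noncomputable abbrev S (K : Type*) [Field K] (ℓ : ℕ) := MvPolynomial (Fin ℓ) K

/-- The linear form associated to a covector `c`. -/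
noncomputable def linForm (c : Fin ℓ → K) : S K ℓ :=
  ∑ i, MvPolynomial.C (c i) * MvPolynomial.X i

/-- The linear functional associated to a covector. -/
noncomputable def toFunc (c : Fin ℓ → K) : (Fin ℓ → K) →ₗ[K] K :=
  ∑ i, c i • LinearMap.proj i

/-- A (central) hyperplane arrangement, given by a finite set of nonzero,
pairwise non-proportional covectors (defining linear forms). -/
structure Arrangement (K : Type*) [Field K] (ℓ : ℕ) where
  hyps : Finset (Fin ℓ → K)
  ne_zero : ∀ c ∈ hyps, c ≠ 0
  nonparallel : ∀ c ∈ hyps, ∀ c' ∈ hyps, c ≠ c' → ∀ t : K, c' ≠ t • c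

/-- Derivations of the polynomial ring `S`. -/
abbrev Der (K : Type*) [Field K] (ℓ : ℕ) := Derivation K (S K ℓ) (S K ℓ)

/-- `θ` is a logarithmic derivation of the multiarrangement `(A, m)`, i.e.
`θ(α_H) ∈ α_H^{m(H)}·S` for all `H ∈ A`. -/
def IsLogDer (A : Arrangement K ℓ) (m : (Fin ℓ → K) → ℕ) (θ : Der K ℓ) : Prop :=
  ∀ c ∈ A.hyps, (linForm c) ^ (m c) ∣ θ (linForm c)

/-- `θ` is homogeneous of polynomial degree `d`: `θ(α)` is homogeneous of degree `d`
for every linear form `α`. -/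
def IsHomogOfDeg (θ : Der K ℓ) (d : ℕ) : Prop :=
  ∀ c : Fin ℓ → K, (θ (linForm c)).IsHomogeneous d

/-- `θ₁, …, θ_ℓ` form a basis of the `S`-module `D(A,m)`. -/
def IsDerBasis (A : Arrangement K ℓ) (m : (Fin ℓ → K) → ℕ) (θ : Fin ℓ → Der K ℓ) : Prop :=
  (∀ i, IsLogDer A m (θ i)) ∧
  ∀ η : Der K ℓ, IsLogDer A m η → ∃! f : Fin ℓ → S K ℓ, η = ∑ i, f i • θ i

/-- `(A,m)` is free with a homogeneous basis of degrees (exponents) `d`. -/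
def IsFreeWithExp (A : Arrangement K ℓ) (m : (Fin ℓ → K) → ℕ) (d : Fin ℓ → ℕ) : Prop :=
  ∃ θ : Fin ℓ → Der K ℓ, (∀ i, IsHomogOfDeg (θ i) (d i)) ∧ IsDerBasis A m θ

/-- `(A,m)` is a free multiarrangement. -/
def IsFree (A : Arrangement K ℓ) (m : (Fin ℓ → K) → ℕ) : Prop :=
  ∃ d : Fin ℓ → ℕ, IsFreeWithExp A m d

/-- `|m|`, the total multiplicity. -/
def msum (A : Arrangement K ℓ) (m : (Fin ℓ → K) → ℕ) : ℕ := ∑ c ∈ A.hyps, m c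

/-- The rank of an arrangement: the dimension of the span of its covectors. -/
noncomputable def rank (A : Arrangement K ℓ) : ℕ :=
  Module.finrank K (Submodule.span K (A.hyps : Set (Fin ℓ → K)))

/-- `A` is reducible: after a linear change of coordinates it is a product of two
arrangements in complementary (nonzero) subspaces.  In terms of covectors: the
covectors split between two complementary nonzero subspaces of the dual space. -/
def Reducible (A : Arrangement K ℓ) : Prop :=
  ∃ W₁ W₂ : Submodule K (Fin ℓ → K), W₁ ≠ ⊥ ∧ W₂ ≠ ⊥ ∧ W₁ ⊓ W₂ = ⊥ ∧ W₁ ⊔ W₂ = ⊤ ∧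
    ∀ c ∈ A.hyps, c ∈ W₁ ∨ c ∈ W₂

/-- The hyperplanes of the localization at a flat; the flat of codimension `r` is
encoded by the `r`-dimensional subspace `U` of the dual space spanned by the
covectors of the hyperplanes containing it. -/
noncomputable def locHyps (A : Arrangement K ℓ) (U : Submodule K (Fin ℓ → K)) :
    Finset (Fin ℓ → K) :=
  A.hyps.filter (· ∈ U)

/-- `U` encodes a flat of `A` of codimension `r` (an element of `L_r(A)`). -/
def IsFlatOfRank (A : Arrangement K ℓ) (U : Submodule K (Fin ℓ → K)) (r : ℕ) : Prop :=
  Module.finrank K U = r ∧ Submodule.span K (locHyps A U : Set (Fin ℓ → K)) = U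

/-- The localization `A_X` of `A` at the flat encoded by `U`. -/
noncomputable def localize (A : Arrangement K ℓ) (U : Submodule K (Fin ℓ → K)) :
    Arrangement K ℓ where
  hyps := locHyps A U
  ne_zero := fun c hc => A.ne_zero c (Finset.mem_filter.mp hc).1
  nonparallel := fun c hc c' hc' =>
    A.nonparallel c (Finset.mem_filter.mp hc).1 c' (Finset.mem_filter.mp hc').1

/-- `H₀` (given by covector `c₀`) is a heavy hyperplane of `(A,m)`. -/
def IsHeavy (A : Arrangement K ℓ) (m : (Fin ℓ → K) → ℕ) (c₀ : Fin ℓ → K) : Prop :=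
  c₀ ∈ A.hyps ∧ (∑ c ∈ A.hyps.erase c₀, m c) ≤ m c₀

/-- `H₀` (given by covector `c₀`) is a locally heavy hyperplane of `(A,m)`. -/
def IsLocallyHeavy (A : Arrangement K ℓ) (m : (Fin ℓ → K) → ℕ) (c₀ : Fin ℓ → K) : Prop :=
  c₀ ∈ A.hyps ∧ ∀ U : Submodule K (Fin ℓ → K), IsFlatOfRank A U 2 → c₀ ∈ U →
    3 ≤ (locHyps A U).card → (∑ c ∈ (locHyps A U).erase c₀, m c) ≤ m c₀

/-- `b` is the second Betti number of the rank-2 localization of `(A,m)` at `U`: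
the product of the nonzero exponents of this free rank-2 multiarrangement. -/
def IsLocalB2 (A : Arrangement K ℓ) (m : (Fin ℓ → K) → ℕ)
    (U : Submodule K (Fin ℓ → K)) (b : ℕ) : Prop :=
  ∃ d : Fin ℓ → ℕ, IsFreeWithExp (localize A U) m d ∧
    b = ∏ i ∈ Finset.univ.filter (fun i => d i ≠ 0), d i

/-- `b` is the second Betti number `b₂(A,m)` of the multiarrangement `(A,m)`. -/
def IsB2 (A : Arrangement K ℓ) (m : (Fin ℓ → K) → ℕ) (b : ℕ) : Prop :=
  ∃ bloc : Submodule K (Fin ℓ → K) → ℕ,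
    (∀ U, IsFlatOfRank A U 2 → IsLocalB2 A m U (bloc U)) ∧
    b = ∑ᶠ U ∈ {U : Submodule K (Fin ℓ → K) | IsFlatOfRank A U 2}, bloc U

/-- The second Betti number of a simple arrangement:
`b₂(A) = Σ_{X ∈ L₂(A)} (|A_X| - 1)`. -/
noncomputable def b2Simple (A : Arrangement K ℓ) : ℕ :=
  ∑ᶠ U ∈ {U : Submodule K (Fin ℓ → K) | IsFlatOfRank A U 2}, ((locHyps A U).card - 1)

/-- The Euler–Ziegler multiplicity of the restricted hyperplane `H₀ ∩ ker(c)` of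
`A^{H₀}`: `m^{H₀}(X) = |m_X| - m(H₀)`. -/
noncomputable def EZmult (A : Arrangement K ℓ) (m : (Fin ℓ → K) → ℕ)
    (c₀ c : Fin ℓ → K) : ℕ :=
  (∑ c' ∈ A.hyps.filter (· ∈ Submodule.span K ({c₀, c} : Set (Fin ℓ → K))), m c') - m c₀

/-- Two covectors are parallel (define the same hyperplane). -/
def Parallel {n : ℕ} (b b' : Fin n → K) : Prop := ∃ t : K, t ≠ 0 ∧ b' = t • b

/-- The covector on `K^n` obtained by restricting the covector `c` on `K^{n+1}` to the
hyperplane `ker c₀`, transported by the linear isomorphism `e : ker c₀ ≃ K^n`. -/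
noncomputable def resCov {n : ℕ} (c₀ : Fin (n+1) → K)
    (e : ↥(LinearMap.ker (toFunc c₀)) ≃ₗ[K] (Fin n → K)) (c : Fin (n+1) → K) :
    Fin n → K :=
  fun j => toFunc c ((e.symm (Pi.single j 1) : ↥(LinearMap.ker (toFunc c₀))) : Fin (n+1) → K)

/-- `(B, mB)` is (a model, in coordinates, of) the Euler–Ziegler restriction
`(A^{H₀}, m^{H₀})` of `(A,m)` to the hyperplane `H₀ = ker c₀ ∈ A`. -/
def IsEZRes {n : ℕ} (A : Arrangement K (n+1)) (m : (Fin (n+1) → K) → ℕ)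
    (c₀ : Fin (n+1) → K) (B : Arrangement K n) (mB : (Fin n → K) → ℕ) : Prop :=
  c₀ ∈ A.hyps ∧
  ∃ e : ↥(LinearMap.ker (toFunc c₀)) ≃ₗ[K] (Fin n → K),
    (∀ c ∈ A.hyps.erase c₀, ∃ b ∈ B.hyps,
        Parallel b (resCov c₀ e c) ∧ mB b = EZmult A m c₀ c) ∧
    (∀ b ∈ B.hyps, ∃ c ∈ A.hyps.erase c₀, Parallel b (resCov c₀ e c))

/-- A combinatorial equivalence between two arrangements: a bijection between the
hyperplanes inducing an isomorphism of intersection lattices (it preserves the rank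
of every subset of hyperplanes). -/
def CombEquiv (A A' : Arrangement K ℓ) : Prop :=
  ∃ φ : (Fin ℓ → K) → (Fin ℓ → K), Set.BijOn φ ↑A.hyps ↑A'.hyps ∧
    ∀ T : Finset (Fin ℓ → K), T ⊆ A.hyps →
      Module.finrank K (Submodule.span K (T : Set (Fin ℓ → K))) =
      Module.finrank K (Submodule.span K ((T.image φ) : Set (Fin ℓ → K)))

/-!
Write `α₀` for the linear form of `H₀` and `θ i (α₀) = α₀ ^ m₀ * g i`. By Saito's criterion the
coefficient determinant of the basis is, up to a unit, the defining polynomial of `(A, m)`.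
Replacing one column of the coefficient matrix by `g` divides the determinant by `α₀ ^ m₀`, which
leaves the product `q` of the `α_H ^ m(H)` over `H ≠ H₀`. Restrict this matrix to `H₀` and expand
its determinant along the column `g`. By local heaviness `θ (α_H)` is, modulo `α₀`, divisible by
the product of the `α_L ^ m(L)` over the hyperplanes `L ≠ H₀` through `H₀ ∩ H`, and therefore all
the cofactors of the column are divisible by the restriction of `q`. Dividing by it writes a unit
as a combination of the restrictions of the `g i`, so that some `g j` has a nonzero constant term.
As `α₀ ^ m₀ * g j` is homogeneous, `g j` is a constant.
-/

open scoped Matrix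

section Interpolation

lemma exists_degree_lt_and_forall_dvd_sub {R ι : Type*} [CommRing R] [Nontrivial R]
    {s : Finset ι} {q : ι → Polynomial R} (hq : ∀ i ∈ s, (q i).Monic)
    (hs : (s : Set ι).Pairwise (Function.onFun IsCoprime q)) (r : ι → Polynomial R) :
    ∃ p : Polynomial R, p.degree < (∏ i ∈ s, q i).degree ∧ ∀ i ∈ s, q i ∣ p - r i := by
  obtain ⟨p, hp⟩ := Ideal.exists_forall_sub_mem_ideal
    (I := fun i : s => Ideal.span {q i})
    (fun i j hij => Ideal.isCoprime_span_singleton_iff _ _ |>.mpr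
      (hs i.2 j.2 (Subtype.coe_injective.ne hij)))
    fun i => r i
  have hprod : (∏ i ∈ s, q i).Monic := Polynomial.monic_prod_of_monic s q hq
  refine ⟨p %ₘ ∏ i ∈ s, q i, Polynomial.degree_modByMonic_lt p hprod, fun i hi => ?_⟩
  have hmod : q i ∣ p %ₘ (∏ i ∈ s, q i) - p := by
    rw [Polynomial.modByMonic_eq_sub_mul_div p _, sub_sub_cancel_left, dvd_neg]
    exact (Finset.dvd_prod_of_mem q hi).mul_right _
  simpa using dvd_add hmod (Ideal.mem_span_singleton.mp (hp ⟨i, hi⟩))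

lemma X_one_dvd_homogenize {R : Type*} [CommSemiring R] {p : Polynomial R} {n : ℕ}
    (hp : p.degree < n) : X 1 ∣ p.homogenize n := by
  refine Finset.dvd_sum fun kl hkl => ?_
  rw [X_dvd_monomial]
  rcases Nat.eq_zero_or_pos kl.2 with h | h
  · rw [Finset.HasAntidiagonal.mem_antidiagonal, h, add_zero] at hkl
    exact .inl (Polynomial.coeff_eq_zero_of_degree_lt (hkl ▸ hp))
  · exact .inr (by simpa using h.ne')

lemma homogenize_natDegree_dvd_homogenize {R : Type*} [CommSemiring R] [NoZeroDivisors R]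
    {p q : Polynomial R} {n : ℕ} (h : q ∣ p) (hp : p.natDegree ≤ n) :
    q.homogenize q.natDegree ∣ p.homogenize n := by
  obtain ⟨r, rfl⟩ := h
  by_cases h0 : q * r = 0
  · simp [h0]
  rw [Polynomial.natDegree_mul (left_ne_zero_of_mul h0) (right_ne_zero_of_mul h0)] at hp
  obtain ⟨e, rfl⟩ := Nat.exists_eq_add_of_le (le_of_add_le_left hp)
  rw [Polynomial.homogenize_mul _ _ le_rfl (by lia)]
  exact dvd_mul_right _ _

lemma homogenize_X_sub_C_pow {R : Type*} [CommRing R] (a : R) (n : ℕ) :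
    ((Polynomial.X - Polynomial.C a) ^ n).homogenize n = (X 0 - C a * X 1) ^ n := by
  have := Polynomial.homogenize_finsetProd (s := Finset.range n)
    (p := fun _ => Polynomial.X - Polynomial.C a) (n := fun _ => 1)
    fun _ _ => Polynomial.natDegree_X_sub_C_le a
  simpa using this

lemma isRelPrime_sub_smul_sub_smul {R : Type*} [CommRing R] [Algebra K R] {α β : R}
    (h : IsRelPrime α β) {a b : K} (hab : a ≠ b) : IsRelPrime (β - a • α) (β - b • α) := by
  intro d hda hdb
  have hdα : d ∣ (b - a) • α := by simpa [sub_smul] using dvd_sub hda hdb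
  replace hdα : d ∣ α := by
    simpa [inv_smul_smul₀ (sub_ne_zero.mpr hab.symm)] using dvd_smul_of_dvd (b - a)⁻¹ hdα
  exact h hdα (by simpa using dvd_add hda (dvd_smul_of_dvd a hdα))

/- If `p` solves the interpolation problem `p ≡ a i` mod `(t - a i) ^ n i`, the form
`P = α ^ N * p (β / α)` is congruent to `a i • α ^ N` modulo `(β - a i • α) ^ n i`, so that
`f - P * g` is divisible by the whole product. The bound on the degree of `p` gives `α ∣ P`. -/
lemma exists_prod_pow_dvd_sub_mul {R ι : Type*} [CommRing R] [Algebra K R]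
    [DecompositionMonoid R] {α β f g : R} (hαβ : IsRelPrime α β) {s : Finset ι} {a : ι → K}
    (ha : Set.InjOn a s) {n : ι → ℕ} {N : ℕ} (hN : ∑ i ∈ s, n i ≤ N)
    (h : ∀ i ∈ s, (β - a i • α) ^ n i ∣ f - a i • (α ^ N * g)) :
    ∃ e, ∏ i ∈ s, (β - a i • α) ^ n i ∣ f - α * e := by
  let q : ι → Polynomial K := fun i => (Polynomial.X - Polynomial.C (a i)) ^ n i
  have hq_monic : ∀ i ∈ s, (q i).Monic := fun i _ => (Polynomial.monic_X_sub_C (a i)).pow (n i)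
  have hq_deg : ∀ i, (q i).natDegree = n i := fun i => by simp [q]
  obtain ⟨p, hp_deg, hp⟩ := exists_degree_lt_and_forall_dvd_sub hq_monic
    (fun i hi j hj hij => (Polynomial.isCoprime_X_sub_C_of_isUnit_sub
      (sub_ne_zero.mpr (ha.ne hi hj hij)).isUnit).pow) fun i => Polynomial.C (a i)
  replace hp_deg : p.degree < N := by
    rw [Polynomial.degree_eq_natDegree (Polynomial.monic_prod_of_monic s q hq_monic).ne_zero,
      Polynomial.natDegree_prod_of_monic s q hq_monic] at hp_deg
    simp only [hq_deg] at hp_deg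
    exact hp_deg.trans_le (by exact_mod_cast hN)
  let φ : MvPolynomial (Fin 2) K →ₐ[K] R := aeval ![β, α]
  obtain ⟨e, he⟩ : α ∣ φ (p.homogenize N) := by
    simpa [φ] using map_dvd φ (X_one_dvd_homogenize hp_deg)
  have hcongr : ∀ i ∈ s, (β - a i • α) ^ n i ∣ φ (p.homogenize N) - a i • α ^ N := by
    intro i hi
    have hdeg : (p - Polynomial.C (a i)).natDegree ≤ N := by
      rw [Polynomial.natDegree_sub_C]
      exact Polynomial.natDegree_le_of_degree_le hp_deg.le
    have := map_dvd φ (homogenize_natDegree_dvd_homogenize (hp i hi) hdeg)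
    rw [hq_deg, homogenize_X_sub_C_pow] at this
    simpa [φ, Algebra.smul_def] using this
  refine ⟨e * g, Finset.prod_dvd_of_isRelPrime (fun i hi j hj hij => ?_) fun i hi => ?_⟩
  · exact (isRelPrime_sub_smul_sub_smul hαβ (ha.ne hi hj hij)).pow
  · convert dvd_sub (h i hi) ((hcongr i hi).mul_right g) using 1
    rw [he, sub_mul, smul_mul_assoc]
    ring

end Interpolation

section Matrix

variable {R n : Type*} [CommRing R] [Fintype n] [DecidableEq n]

lemma mul_det_updateCol_of_mulVec_eq_smul {M : Matrix n n R} {v g : n → R} {p : R}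
    (h : M *ᵥ v = p • g) (k : n) : p * (M.updateCol k g).det = v k * M.det := by
  have := congr_fun (congr_arg (M.adjugate *ᵥ ·) h) k
  simpa [Matrix.mulVec_mulVec, Matrix.adjugate_mul, Matrix.smul_mulVec, Matrix.mulVec_smul,
    ← Matrix.cramer_eq_adjugate_mulVec, Matrix.cramer_apply, mul_comm] using this.symm

lemma dvd_det_of_forall_dvd_mulVec {M : Matrix n n R} {v : n → R} {k : n} (hk : IsUnit (v k))
    {p : R} (h : ∀ i, p ∣ (M *ᵥ v) i) : p ∣ M.det := by
  choose g hg using h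
  have := mul_det_updateCol_of_mulVec_eq_smul (funext hg : M *ᵥ v = p • g) k
  exact hk.dvd_mul_left.mp (this ▸ dvd_mul_right p _)

lemma updateCol_mulVec_of_eq_zero (M : Matrix n n R) {v : n → R} {k : n} (hk : v k = 0)
    (g : n → R) : M.updateCol k g *ᵥ v = M *ᵥ v := by
  ext i
  refine Finset.sum_congr rfl fun j _ => ?_
  rcases eq_or_ne j k with rfl | hj
  · simp [hk]
  · simp [hj]

lemma exists_det_ne_zero_and_mulVec_eq_single {F : Type*} [Field F] {v : n → F} {k : n}
    (hk : v k ≠ 0) : ∃ E : Matrix n n F, E.det ≠ 0 ∧ E *ᵥ v = Pi.single k 1 := by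
  let B : Matrix n n F := (1 : Matrix n n F).updateCol k v
  have hB : IsUnit B.det := by
    simpa [B, ← Matrix.cramer_apply, Matrix.cramer_one] using hk
  refine ⟨B⁻¹, (Matrix.isUnit_nonsing_inv_det B hB).ne_zero, ?_⟩
  have hBk : B *ᵥ Pi.single k 1 = v := by ext; simp [B]
  rw [← hBk, Matrix.mulVec_mulVec, Matrix.nonsing_inv_mul B hB, Matrix.one_mulVec]

end Matrix

lemma eq_and_mul_eq_C_mul_of_isHomogeneous {σ R : Type*} [CommRing R] [IsDomain R]
    {p g : MvPolynomial σ R} {n d : ℕ} (hp : p.IsHomogeneous n) (hp0 : p ≠ 0)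
    (hpg : (p * g).IsHomogeneous d) (hg : constantCoeff g ≠ 0) :
    d = n ∧ p * g = C (constantCoeff g) * p := by
  have hcomp : homogeneousComponent n (p * g) = C (constantCoeff g) * p := by
    conv_lhs => rw [← sum_homogeneousComponent (φ := g), Finset.mul_sum, map_sum]
    rw [Finset.sum_eq_single_of_mem 0 (by simp)]
    · rw [homogeneousComponent_zero, mul_comm, ← constantCoeff_eq]
      exact homogeneousComponent_eq_self (hp.C_mul _)
    · intro i _ hi
      rw [homogeneousComponent_of_mem (hp.mul (homogeneousComponent_isHomogeneous i g)),
        if_neg (by lia)]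
  rw [homogeneousComponent_of_mem hpg] at hcomp
  split_ifs at hcomp with hnd
  · exact ⟨hnd.symm, hcomp⟩
  · exact absurd hcomp.symm (mul_ne_zero (C_ne_zero.mpr hg) hp0)

section LinearForms

lemma linForm_eq_linearCombination (c : Fin ℓ → K) :
    linForm c = Fintype.linearCombination K (X : Fin ℓ → S K ℓ) c := by
  simp [linForm, Fintype.linearCombination_apply, smul_eq_C_mul]

lemma linForm_sub (c c' : Fin ℓ → K) : linForm (c - c') = linForm c - linForm c' := by
  simp only [linForm_eq_linearCombination, map_sub]

lemma linForm_smul (a : K) (c : Fin ℓ → K) : linForm (a • c) = a • linForm c := by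
  simp only [linForm_eq_linearCombination, map_smul]

lemma linForm_zero : linForm (0 : Fin ℓ → K) = 0 := by
  simp only [linForm_eq_linearCombination, map_zero]

lemma coeff_linForm (c : Fin ℓ → K) (j : Fin ℓ) :
    coeff (Finsupp.single j 1) (linForm c) = c j := by
  simp [linForm, coeff_sum, coeff_C_mul, coeff_X, Finsupp.single_left_inj]

lemma linForm_injective : Function.Injective (linForm : (Fin ℓ → K) → S K ℓ) := fun c c' h => by
  ext j
  rw [← coeff_linForm c, h, coeff_linForm]

lemma linForm_ne_zero {c : Fin ℓ → K} (hc : c ≠ 0) : linForm c ≠ 0 :=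
  linForm_zero (K := K) ▸ linForm_injective.ne hc

lemma isHomogeneous_linForm (c : Fin ℓ → K) : (linForm c).IsHomogeneous 1 :=
  IsHomogeneous.sum _ _ _ fun i _ => isHomogeneous_C_mul_X (c i) i

lemma irreducible_linForm {c : Fin ℓ → K} (hc : c ≠ 0) : Irreducible (linForm c) := by
  obtain ⟨j, hj⟩ := Function.ne_iff.mp hc
  refine irreducible_of_totalDegree_eq_one
    ((isHomogeneous_linForm c).totalDegree (linForm_ne_zero hc)) fun x hx => ?_
  have hxj := hx (Finsupp.single j 1)
  rw [coeff_linForm] at hxj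
  exact (ne_zero_of_dvd_ne_zero hj hxj).isUnit

lemma exists_eq_smul_of_linForm_dvd {c c' : Fin ℓ → K} (hc' : c' ≠ 0)
    (h : linForm c ∣ linForm c') : ∃ t : K, c' = t • c := by
  obtain ⟨q, hq⟩ := h
  have hne := hq ▸ linForm_ne_zero hc'
  have hdeg := totalDegree_mul_of_isDomain (left_ne_zero_of_mul hne) (right_ne_zero_of_mul hne)
  rw [← hq, (isHomogeneous_linForm c').totalDegree (linForm_ne_zero hc'),
    (isHomogeneous_linForm c).totalDegree (left_ne_zero_of_mul hne), left_eq_add,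
    totalDegree_eq_zero_iff_eq_C] at hdeg
  refine ⟨coeff 0 q, linForm_injective ?_⟩
  rw [hq, hdeg, linForm_smul, coeff_zero_C, smul_eq_C_mul, mul_comm]

lemma isRelPrime_linForm {c c' : Fin ℓ → K} (hc : c ≠ 0) (hc' : c' ≠ 0)
    (h : ∀ t : K, c' ≠ t • c) : IsRelPrime (linForm c) (linForm c') :=
  (irreducible_linForm hc).isRelPrime_iff_not_dvd.mpr fun hdvd =>
    (exists_eq_smul_of_linForm_dvd hc' hdvd).elim h

lemma Arrangement.isRelPrime_linForm (A : Arrangement K ℓ) {c c' : Fin ℓ → K} (hc : c ∈ A.hyps)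
    (hc' : c' ∈ A.hyps) (h : c ≠ c') : IsRelPrime (linForm c) (linForm c') :=
  ArrPaper.isRelPrime_linForm (A.ne_zero c hc) (A.ne_zero c' hc') (A.nonparallel c hc c' hc' h)

end LinearForms

section LogarithmicDerivations

variable {A : Arrangement K ℓ} {m : (Fin ℓ → K) → ℕ} {θ : Fin ℓ → Der K ℓ}

/-- The product of the `α_H ^ m(H)` over the hyperplanes `H` in `s`: for `s = A.hyps`, the
defining polynomial of the multiarrangement `(A, m)`. -/
noncomputable def definingPoly (m : (Fin ℓ → K) → ℕ) (s : Finset (Fin ℓ → K)) : S K ℓ :=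
  ∏ c ∈ s, linForm c ^ m c

lemma linForm_pow_dvd_definingPoly {s : Finset (Fin ℓ → K)} {c : Fin ℓ → K} (hc : c ∈ s) :
    linForm c ^ m c ∣ definingPoly m s :=
  Finset.dvd_prod_of_mem (fun c => linForm c ^ m c) hc

lemma linForm_pow_mul_definingPoly_erase {s : Finset (Fin ℓ → K)} {c : Fin ℓ → K} (hc : c ∈ s) :
    linForm c ^ m c * definingPoly m (s.erase c) = definingPoly m s :=
  Finset.mul_prod_erase s (fun c => linForm c ^ m c) hc

lemma isRelPrime_linForm_definingPoly_erase {c : Fin ℓ → K} (hc : c ∈ A.hyps) :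
    IsRelPrime (linForm c) (definingPoly m (A.hyps.erase c)) :=
  IsRelPrime.prod_right fun _ hc' => (A.isRelPrime_linForm hc (Finset.mem_of_mem_erase hc')
    (Finset.ne_of_mem_erase hc').symm).pow_right

/-- The coefficient matrix of Saito's criterion: row `i` holds the coefficients of `θ i`. -/
noncomputable def coeffMatrix (θ : Fin ℓ → Der K ℓ) : Matrix (Fin ℓ) (Fin ℓ) (S K ℓ) :=
  Matrix.of fun i j => θ i (X j)

lemma coeffMatrix_mulVec (θ : Fin ℓ → Der K ℓ) (c : Fin ℓ → K) :
    coeffMatrix θ *ᵥ (C ∘ c) = fun i => θ i (linForm c) := by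
  ext1 i
  simp [coeffMatrix, Matrix.mulVec, dotProduct, linForm_eq_linearCombination,
    Fintype.linearCombination_apply, smul_eq_C_mul, mul_comm]

lemma isUnit_C_apply {c : Fin ℓ → K} {k : Fin ℓ} (hk : c k ≠ 0) :
    IsUnit ((C ∘ c : Fin ℓ → S K ℓ) k) :=
  hk.isUnit.map C

lemma definingPoly_dvd_det_coeffMatrix (hθ : ∀ i, IsLogDer A m (θ i)) :
    definingPoly m A.hyps ∣ (coeffMatrix θ).det := by
  refine Finset.prod_dvd_of_isRelPrime
    (fun c hc c' hc' hne => (A.isRelPrime_linForm hc hc' hne).pow) fun c hc => ?_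
  obtain ⟨k, hk⟩ := Function.ne_iff.mp (A.ne_zero c hc)
  refine dvd_det_of_forall_dvd_mulVec (isUnit_C_apply hk) fun i => ?_
  rw [coeffMatrix_mulVec]
  exact hθ i c hc

lemma coeffMatrix_sum_smul (f : Fin ℓ → Fin ℓ → S K ℓ) (θ : Fin ℓ → Der K ℓ) :
    coeffMatrix (fun i => ∑ l, f i l • θ l) = Matrix.of f * coeffMatrix θ := by
  ext1 i j
  change Derivation.coeFnAddMonoidHom _ _ = _
  simp [coeffMatrix, Matrix.mul_apply, map_sum]

lemma det_coeffMatrix_dvd_of_isDerBasis (hb : IsDerBasis A m θ) {η : Fin ℓ → Der K ℓ}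
    (hη : ∀ i, IsLogDer A m (η i)) : (coeffMatrix θ).det ∣ (coeffMatrix η).det := by
  choose f hf _ using fun i => hb.2 (η i) (hη i)
  rw [show η = fun i => ∑ l, f i l • θ l from funext hf,
    coeffMatrix_sum_smul f, Matrix.det_mul]
  exact dvd_mul_left _ _

/-- The derivation with constant coefficients `v`. -/
noncomputable def constDer (v : Fin ℓ → K) : Der K ℓ :=
  mkDerivation K (C ∘ v)

lemma constDer_linForm (v c : Fin ℓ → K) : constDer v (linForm c) = C (v ⬝ᵥ c) := by
  simp [constDer, linForm_eq_linearCombination, Fintype.linearCombination_apply, dotProduct,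
    mkDerivation_X, smul_eq_C_mul, mul_comm]

lemma coeffMatrix_smul_constDer (a : Fin ℓ → S K ℓ) (E : Matrix (Fin ℓ) (Fin ℓ) K) :
    coeffMatrix (fun i => a i • constDer (E i)) = Matrix.diagonal a * E.map C := by
  ext1 i j
  simp [coeffMatrix, constDer, mkDerivation_X, Matrix.diagonal_mul]

lemma det_coeffMatrix_dvd_linForm_pow_mul (hb : IsDerBasis A m θ) {c : Fin ℓ → K}
    (hc : c ∈ A.hyps) :
    (coeffMatrix θ).det ∣ linForm c ^ m c * definingPoly m (A.hyps.erase c) ^ ℓ := by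
  obtain ⟨k, hk⟩ := Function.ne_iff.mp (A.ne_zero c hc)
  obtain ⟨E, hE, hEc⟩ := exists_det_ne_zero_and_mulVec_eq_single hk
  replace hEc : ∀ i, E i ⬝ᵥ c = (Pi.single k 1 : Fin ℓ → K) i := congr_fun hEc
  let a : Fin ℓ → S K ℓ := fun i =>
    definingPoly m (A.hyps.erase c) * (Pi.mulSingle k (linForm c ^ m c) : Fin ℓ → S K ℓ) i
  have hη : ∀ i, IsLogDer A m (a i • constDer (E i)) := by
    intro i c' hc'
    rw [Derivation.smul_apply, constDer_linForm, smul_eq_mul]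
    rcases eq_or_ne c' c with rfl | hne
    · rw [hEc]
      rcases eq_or_ne i k with rfl | hik
      · exact dvd_mul_of_dvd_left (by simp [a]) _
      · simp [hik]
    · have hmem : c' ∈ A.hyps.erase c := Finset.mem_erase.mpr ⟨hne, hc'⟩
      exact ((linForm_pow_dvd_definingPoly hmem).mul_right _).mul_right _
  have hdet := det_coeffMatrix_dvd_of_isDerBasis hb hη
  rw [coeffMatrix_smul_constDer, Matrix.det_mul, Matrix.det_diagonal,
    ← RingHom.mapMatrix_apply, ← RingHom.map_det,
    (hE.isUnit.map C).dvd_mul_right, Finset.prod_mul_distrib] at hdet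
  simpa [mul_comm] using hdet

lemma associated_det_coeffMatrix_definingPoly (hb : IsDerBasis A m θ) (hA : A.hyps.Nonempty) :
    Associated (coeffMatrix θ).det (definingPoly m A.hyps) := by
  obtain ⟨u, hu⟩ := definingPoly_dvd_det_coeffMatrix hb.1
  have hu_dvd : ∀ c ∈ A.hyps, u ∣ definingPoly m (A.hyps.erase c) ^ ℓ := by
    intro c hc
    have hdvd := det_coeffMatrix_dvd_linForm_pow_mul hb hc
    rw [hu, ← linForm_pow_mul_definingPoly_erase hc, mul_assoc] at hdvd
    have hc0 : linForm c ^ m c ≠ 0 := pow_ne_zero _ (linForm_ne_zero (A.ne_zero c hc))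
    exact dvd_of_mul_left_dvd ((mul_dvd_mul_iff_left hc0).mp hdvd)
  have hu_relPrime : ∀ c ∈ A.hyps, IsRelPrime u (linForm c) := fun c hc =>
    .of_dvd_left (isRelPrime_linForm_definingPoly_erase hc).pow_right.symm (hu_dvd c hc)
  obtain ⟨c, hc⟩ := hA
  have hu_unit : IsUnit u := IsRelPrime.isUnit_of_dvd
    (IsRelPrime.pow_right <| IsRelPrime.prod_right fun c' hc' =>
      (hu_relPrime c' (Finset.mem_of_mem_erase hc')).pow_right) (hu_dvd c hc)
  rw [hu]
  exact associated_mul_unit_left _ _ hu_unit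

end LogarithmicDerivations

section Pencils

variable {A : Arrangement K ℓ} {m : (Fin ℓ → K) → ℕ} {c₀ c c' : Fin ℓ → K}

/-- The hyperplanes other than `H₀ = ker c₀` containing the flat `H₀ ∩ ker c` of codimension
two. -/
noncomputable def pencil (A : Arrangement K ℓ) (c₀ c : Fin ℓ → K) : Finset (Fin ℓ → K) :=
  (locHyps A (Submodule.span K {c₀, c})).erase c₀

lemma mem_locHyps {U : Submodule K (Fin ℓ → K)} : c ∈ locHyps A U ↔ c ∈ A.hyps ∧ c ∈ U :=
  Finset.mem_filter

lemma pencil_subset : pencil A c₀ c ⊆ A.hyps.erase c₀ :=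
  Finset.erase_subset_erase _ (Finset.filter_subset _ _)

lemma self_mem_pencil (hc : c ∈ A.hyps.erase c₀) : c ∈ pencil A c₀ c :=
  Finset.mem_erase.mpr ⟨Finset.ne_of_mem_erase hc,
    mem_locHyps.mpr ⟨Finset.mem_of_mem_erase hc, Submodule.subset_span (by simp)⟩⟩

lemma exists_sub_smul_eq_smul_of_mem_pencil (h₀ : c₀ ∈ A.hyps) (hc' : c' ∈ pencil A c₀ c) :
    ∃ a t : K, t ≠ 0 ∧ c - a • c₀ = t • c' := by
  obtain ⟨hne, hc'⟩ := Finset.mem_erase.mp hc'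
  obtain ⟨hA, hspan⟩ := mem_locHyps.mp hc'
  obtain ⟨x, y, rfl⟩ := Submodule.mem_span_pair.mp hspan
  have hy : y ≠ 0 := fun hy => A.nonparallel c₀ h₀ _ hA hne.symm x (by simp [hy])
  refine ⟨-(y⁻¹ * x), y⁻¹, inv_ne_zero hy, ?_⟩
  rw [smul_add, inv_smul_smul₀ hy, neg_smul, mul_smul]
  abel

lemma mem_pencil_iff_span_eq (h₀ : c₀ ∈ A.hyps) (hc' : c' ∈ A.hyps.erase c₀) :
    c' ∈ pencil A c₀ c ↔ Submodule.span K {c₀, c'} = Submodule.span K {c₀, c} := by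
  constructor
  · intro h
    obtain ⟨a, t, -, hat⟩ := exists_sub_smul_eq_smul_of_mem_pencil h₀ h
    refine le_antisymm ?_ ?_ <;>
      refine Submodule.span_le.mpr (Set.pair_subset (Submodule.subset_span (by simp)) ?_)
    · exact (mem_locHyps.mp (Finset.mem_of_mem_erase h)).2
    · exact Submodule.mem_span_pair.mpr ⟨a, t, by rw [← hat, add_sub_cancel]⟩
  · intro h
    have hspan : c' ∈ Submodule.span K {c₀, c} := h ▸ Submodule.subset_span (by simp)
    obtain ⟨hne, hA⟩ := Finset.mem_erase.mp hc'
    exact Finset.mem_erase.mpr ⟨hne, mem_locHyps.mpr ⟨hA, hspan⟩⟩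

lemma isFlatOfRank_span_pair (h₀ : c₀ ∈ A.hyps) (hc : c ∈ A.hyps.erase c₀) :
    IsFlatOfRank A (Submodule.span K {c₀, c}) 2 := by
  obtain ⟨hne, hA⟩ := Finset.mem_erase.mp hc
  constructor
  · have hli : LinearIndependent K ![c₀, c] :=
      (LinearIndependent.pair_iff' (A.ne_zero c₀ h₀)).mpr fun a ha =>
        A.nonparallel c₀ h₀ c hA hne.symm a ha.symm
    rw [← Matrix.range_cons_cons_empty c₀ c ![], finrank_span_eq_card hli, Fintype.card_fin]
  · refine le_antisymm (Submodule.span_le.mpr fun v hv => (mem_locHyps.mp hv).2)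
      (Submodule.span_mono ?_)
    refine Set.pair_subset ?_ ?_
    · exact mem_locHyps.mpr ⟨h₀, Submodule.subset_span (by simp)⟩
    · exact mem_locHyps.mpr ⟨hA, Submodule.subset_span (by simp)⟩

lemma IsLocallyHeavy.pencil_eq_singleton_or_sum_le (hlh : IsLocallyHeavy A m c₀)
    (hc : c ∈ A.hyps.erase c₀) :
    pencil A c₀ c = {c} ∨ ∑ c' ∈ pencil A c₀ c, m c' ≤ m c₀ := by
  have h₀ : c₀ ∈ Submodule.span K {c₀, c} := Submodule.subset_span (by simp)
  by_cases hcard : 3 ≤ (locHyps A (Submodule.span K {c₀, c})).card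
  · exact .inr (hlh.2 _ (isFlatOfRank_span_pair hlh.1 hc) h₀ hcard)
  · have hcard' : (pencil A c₀ c).card ≤ 1 := by
      rw [pencil, Finset.card_erase_of_mem (mem_locHyps.mpr ⟨hlh.1, h₀⟩)]
      lia
    exact .inl (Finset.eq_singleton_iff_unique_mem.mpr ⟨self_mem_pencil hc, fun c' hc' =>
      Finset.card_le_one.mp hcard' c' hc' c (self_mem_pencil hc)⟩)

lemma associated_linForm_of_eq_smul {t : K} (ht : t ≠ 0) (h : c = t • c') :
    Associated (linForm c) (linForm c') := by
  rw [h, linForm_smul, smul_eq_C_mul]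
  exact associated_unit_mul_left _ _ (ht.isUnit.map C)

lemma IsLogDer.linForm_pow_dvd {θ : Der K ℓ} (hθ : IsLogDer A m θ) (hc' : c' ∈ A.hyps)
    {t : K} (h : c = t • c') : linForm c' ^ m c' ∣ θ (linForm c) := by
  rw [h, linForm_smul, Derivation.map_smul]
  exact dvd_smul_of_dvd t (hθ c' hc')

lemma injOn_of_sub_smul_eq_smul {a t : (Fin ℓ → K) → K} {s : Finset (Fin ℓ → K)}
    (hs : s ⊆ A.hyps) (ht : ∀ c' ∈ s, t c' ≠ 0)
    (hat : ∀ c' ∈ s, c - a c' • c₀ = t c' • c') : Set.InjOn a s := by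
  intro x hx y hy hxy
  by_contra hne
  refine A.nonparallel x (hs hx) y (hs hy) hne ((t y)⁻¹ * t x) ?_
  rw [mul_smul, ← hat x hx, hxy, hat y hy, inv_smul_smul₀ (ht y hy)]

/- Each covector of the pencil is proportional to some `c - a • c₀`; so `θ (linForm c)` satisfies
the congruences of `exists_prod_pow_dvd_sub_mul`, with `N = m c₀` bounding the degree. -/
lemma IsLocallyHeavy.exists_definingPoly_pencil_dvd (hlh : IsLocallyHeavy A m c₀)
    {θ : Der K ℓ} (hθ : IsLogDer A m θ) (hc : c ∈ A.hyps.erase c₀) :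
    ∃ h, definingPoly m (pencil A c₀ c) ∣ θ (linForm c) - linForm c₀ * h := by
  rcases hlh.pencil_eq_singleton_or_sum_le hc with hsing | hsum
  · exact ⟨0, by simpa [hsing, definingPoly] using hθ c (Finset.mem_of_mem_erase hc)⟩
  obtain ⟨hne, hA⟩ := Finset.mem_erase.mp hc
  have hsub : pencil A c₀ c ⊆ A.hyps := pencil_subset.trans (Finset.erase_subset _ _)
  choose! a t ht hat using fun c' (hc' : c' ∈ pencil A c₀ c) =>
    exists_sub_smul_eq_smul_of_mem_pencil hlh.1 hc'
  obtain ⟨g, hg⟩ := hθ c₀ hlh.1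
  have hassoc : ∀ c' ∈ pencil A c₀ c,
      Associated ((linForm c - a c' • linForm c₀) ^ m c') (linForm c' ^ m c') := by
    intro c' hc'
    rw [← linForm_smul, ← linForm_sub]
    exact (associated_linForm_of_eq_smul (ht c' hc') (hat c' hc')).pow_pow
  have hdvd : ∀ c' ∈ pencil A c₀ c, (linForm c - a c' • linForm c₀) ^ m c' ∣
      θ (linForm c) - a c' • (linForm c₀ ^ m c₀ * g) := by
    intro c' hc'
    have := hθ.linForm_pow_dvd (hsub hc') (hat c' hc')
    rw [linForm_sub, linForm_smul, map_sub, Derivation.map_smul, hg] at this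
    exact (hassoc c' hc').dvd.trans this
  obtain ⟨h, hh⟩ := exists_prod_pow_dvd_sub_mul (A.isRelPrime_linForm hlh.1 hA hne.symm)
    (injOn_of_sub_smul_eq_smul hsub ht hat) hsum hdvd
  exact ⟨h, (Associated.prod _ _ _ hassoc).symm.dvd.trans hh⟩

end Pencils

section Restriction

variable {A : Arrangement K ℓ} {m : (Fin ℓ → K) → ℕ} {c₀ c c' : Fin ℓ → K} {k : Fin ℓ}

/-- The projection of covectors along `c₀` onto those with vanishing `k`-th coordinate: the class
of a covector in the dual space of `ker c₀`, when `c₀ k ≠ 0`. -/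
noncomputable def projCov (c₀ : Fin ℓ → K) (k : Fin ℓ) : (Fin ℓ → K) →ₗ[K] (Fin ℓ → K) :=
  LinearMap.id - (LinearMap.proj k).smulRight ((c₀ k)⁻¹ • c₀)

lemma projCov_apply (c₀ : Fin ℓ → K) (k : Fin ℓ) (c : Fin ℓ → K) :
    projCov c₀ k c = c - (c k * (c₀ k)⁻¹) • c₀ := by
  simp [projCov, smul_smul]

lemma projCov_self (hk : c₀ k ≠ 0) : projCov c₀ k c₀ = 0 := by
  simp [projCov_apply, hk]

lemma projCov_apply_self (hk : c₀ k ≠ 0) (c : Fin ℓ → K) : projCov c₀ k c k = 0 := by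
  simp [projCov_apply, hk]

lemma projCov_ne_zero (h₀ : c₀ ∈ A.hyps) (hc : c ∈ A.hyps.erase c₀) : projCov c₀ k c ≠ 0 := by
  rw [projCov_apply, sub_ne_zero]
  exact A.nonparallel c₀ h₀ c (Finset.mem_of_mem_erase hc) (Finset.ne_of_mem_erase hc).symm _

lemma mem_span_pair_of_projCov_eq_smul {t : K} (h : projCov c₀ k c' = t • projCov c₀ k c) :
    c' ∈ Submodule.span K {c₀, c} := by
  rw [projCov_apply, projCov_apply, sub_eq_iff_eq_add] at h
  rw [h]
  have h₀ : c₀ ∈ Submodule.span K {c₀, c} := Submodule.subset_span (by simp)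
  have hc : c ∈ Submodule.span K {c₀, c} := Submodule.subset_span (by simp)
  exact add_mem (Submodule.smul_mem _ _ (sub_mem hc (Submodule.smul_mem _ _ h₀)))
    (Submodule.smul_mem _ _ h₀)

/-- The restriction of polynomials to the hyperplane `ker c₀`, where the `k`-th variable is
eliminated by means of `c₀` (when `c₀ k ≠ 0`). -/
noncomputable def restrict (c₀ : Fin ℓ → K) (k : Fin ℓ) : S K ℓ →ₐ[K] S K ℓ :=
  aeval fun i => linForm (projCov c₀ k (Pi.single i 1))

lemma restrict_linForm (c₀ : Fin ℓ → K) (k : Fin ℓ) (c : Fin ℓ → K) :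
    restrict c₀ k (linForm c) = linForm (projCov c₀ k c) := by
  have : (restrict c₀ k).toLinearMap ∘ₗ Fintype.linearCombination K X =
      Fintype.linearCombination K X ∘ₗ projCov c₀ k :=
    (Pi.basisFun K (Fin ℓ)).ext fun i => by simp [restrict, linForm_eq_linearCombination]
  simp only [linForm_eq_linearCombination]
  exact LinearMap.congr_fun this c

lemma restrict_linForm_self (hk : c₀ k ≠ 0) : restrict c₀ k (linForm c₀) = 0 := by
  rw [restrict_linForm, projCov_self hk, linForm_zero]

lemma restrict_C (c₀ : Fin ℓ → K) (k : Fin ℓ) (a : K) : restrict c₀ k (C a) = C a :=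
  (restrict c₀ k).commutes a

lemma constantCoeff_linForm (c : Fin ℓ → K) : constantCoeff (linForm c) = 0 := by
  simp [linForm]

lemma constantCoeff_restrict (c₀ : Fin ℓ → K) (k : Fin ℓ) (p : S K ℓ) :
    constantCoeff (restrict c₀ k p) = constantCoeff p := by
  induction p using MvPolynomial.induction_on with
  | C a => rw [restrict_C]
  | add p q hp hq => simp [hp, hq]
  | mul_X p i _ => simp [restrict, constantCoeff_linForm]

lemma restrict_definingPoly_ne_zero (h₀ : c₀ ∈ A.hyps) :
    restrict c₀ k (definingPoly m (A.hyps.erase c₀)) ≠ 0 := by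
  rw [definingPoly, map_prod]
  refine Finset.prod_ne_zero_iff.mpr fun c hc => ?_
  rw [map_pow, restrict_linForm]
  exact pow_ne_zero _ (linForm_ne_zero (projCov_ne_zero h₀ hc))

lemma isRelPrime_restrict_linForm (h₀ : c₀ ∈ A.hyps) (hc : c ∈ A.hyps.erase c₀)
    (hc' : c' ∈ A.hyps.erase c₀) (h : Submodule.span K {c₀, c} ≠ Submodule.span K {c₀, c'}) :
    IsRelPrime (restrict c₀ k (linForm c)) (restrict c₀ k (linForm c')) := by
  rw [restrict_linForm, restrict_linForm]
  refine isRelPrime_linForm (projCov_ne_zero h₀ hc) (projCov_ne_zero h₀ hc') fun t ht => h ?_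
  obtain ⟨hne, hA⟩ := Finset.mem_erase.mp hc'
  exact ((mem_pencil_iff_span_eq h₀ hc').mp (Finset.mem_erase.mpr
    ⟨hne, mem_locHyps.mpr ⟨hA, mem_span_pair_of_projCov_eq_smul ht⟩⟩)).symm

lemma restrict_definingPoly_dvd_of_forall_pencil (h₀ : c₀ ∈ A.hyps) {p : S K ℓ}
    (h : ∀ c ∈ A.hyps.erase c₀, restrict c₀ k (definingPoly m (pencil A c₀ c)) ∣ p) :
    restrict c₀ k (definingPoly m (A.hyps.erase c₀)) ∣ p := by
  let flat : (Fin ℓ → K) → Submodule K (Fin ℓ → K) := fun c => Submodule.span K {c₀, c}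
  have hfiber : ∀ c,
      (A.hyps.erase c₀).filter (fun c' => flat c' = flat c) = pencil A c₀ c := by
    intro c
    ext c'
    rw [Finset.mem_filter]
    exact ⟨fun h => (mem_pencil_iff_span_eq h₀ h.1).mpr h.2, fun h =>
      ⟨pencil_subset h, (mem_pencil_iff_span_eq h₀ (pencil_subset h)).mp h⟩⟩
  rw [definingPoly, ← Finset.prod_fiberwise_of_maps_to (g := flat)
    fun c hc => Finset.mem_image_of_mem flat hc, map_prod]
  refine Finset.prod_dvd_of_isRelPrime (fun U _ U' _ hUU' => ?_) fun U hU => ?_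
  · simp only [Function.onFun, map_prod, map_pow]
    refine IsRelPrime.prod_left fun c hcU => IsRelPrime.prod_right fun c' hcU' => .pow ?_
    obtain ⟨hc, rfl⟩ := Finset.mem_filter.mp hcU
    obtain ⟨hc', rfl⟩ := Finset.mem_filter.mp hcU'
    exact isRelPrime_restrict_linForm h₀ hc hc' hUU'
  · obtain ⟨c, hc, rfl⟩ := Finset.mem_image.mp hU
    rw [hfiber c]
    exact h c hc

lemma restrict_apply_linForm_projCov {θ : Der K ℓ}
    (hθ : restrict c₀ k (θ (linForm c₀)) = 0) (c : Fin ℓ → K) :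
    restrict c₀ k (θ (linForm (projCov c₀ k c))) = restrict c₀ k (θ (linForm c)) := by
  rw [projCov_apply, linForm_sub, linForm_smul, map_sub, Derivation.map_smul, map_sub, map_smul,
    hθ, smul_zero, sub_zero]

lemma IsLocallyHeavy.restrict_definingPoly_pencil_dvd (hlh : IsLocallyHeavy A m c₀)
    (hk : c₀ k ≠ 0) {θ : Der K ℓ} (hθ : IsLogDer A m θ) (hc : c ∈ A.hyps.erase c₀) :
    restrict c₀ k (definingPoly m (pencil A c₀ c)) ∣ restrict c₀ k (θ (linForm c)) := by
  obtain ⟨h, hh⟩ := hlh.exists_definingPoly_pencil_dvd hθ hc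
  simpa [restrict_linForm_self hk] using map_dvd (restrict c₀ k) hh

/-- The restriction to `ker c₀` of the coefficient matrix of `θ`, with its `k`-th column replaced by
`g`; it is used for the quotients `g i` of `θ i (linForm c₀)` by `linForm c₀ ^ m c₀`. -/
noncomputable def restrictedMatrix (θ : Fin ℓ → Der K ℓ) (g : Fin ℓ → S K ℓ) (c₀ : Fin ℓ → K)
    (k : Fin ℓ) : Matrix (Fin ℓ) (Fin ℓ) (S K ℓ) :=
  ((coeffMatrix θ).updateCol k g).map (restrict c₀ k)

lemma associated_det_restrictedMatrix {θ : Fin ℓ → Der K ℓ} {g : Fin ℓ → S K ℓ}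
    (h₀ : c₀ ∈ A.hyps) (hk : c₀ k ≠ 0) (hb : IsDerBasis A m θ)
    (hg : ∀ i, θ i (linForm c₀) = linForm c₀ ^ m c₀ * g i) :
    Associated (restrictedMatrix θ g c₀ k).det
      (restrict c₀ k (definingPoly m (A.hyps.erase c₀))) := by
  have hcramer : linForm c₀ ^ m c₀ * ((coeffMatrix θ).updateCol k g).det =
      (C ∘ c₀) k * (coeffMatrix θ).det :=
    mul_det_updateCol_of_mulVec_eq_smul ((coeffMatrix_mulVec θ c₀).trans (funext hg)) k
  have hdet : Associated (linForm c₀ ^ m c₀ * ((coeffMatrix θ).updateCol k g).det)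
      (linForm c₀ ^ m c₀ * definingPoly m (A.hyps.erase c₀)) := by
    rw [hcramer, linForm_pow_mul_definingPoly_erase h₀]
    exact (associated_unit_mul_left _ _ (isUnit_C_apply hk)).trans
      (associated_det_coeffMatrix_definingPoly hb ⟨c₀, h₀⟩)
  have hq := (hdet.of_mul_left (.refl _)
    (pow_ne_zero _ (linForm_ne_zero (A.ne_zero c₀ h₀)))).map (restrict c₀ k)
  rwa [AlgHom.map_det] at hq

lemma restrictedMatrix_mulVec_projCov {θ : Fin ℓ → Der K ℓ} (g : Fin ℓ → S K ℓ) (hk : c₀ k ≠ 0)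
    {i : Fin ℓ} (hθ : restrict c₀ k (θ i (linForm c₀)) = 0) (c : Fin ℓ → K) :
    (restrictedMatrix θ g c₀ k *ᵥ (C ∘ projCov c₀ k c)) i = restrict c₀ k (θ i (linForm c)) := by
  have hv : (C ∘ projCov c₀ k c : Fin ℓ → S K ℓ) =
      restrict c₀ k ∘ (C ∘ projCov c₀ k c : Fin ℓ → S K ℓ) :=
    funext fun j => (restrict_C c₀ k _).symm
  have hvk : (C ∘ projCov c₀ k c : Fin ℓ → S K ℓ) k = 0 := by simp [projCov_apply_self hk]
  rw [hv, ← restrict_apply_linForm_projCov hθ c]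
  refine (RingHom.map_mulVec (restrict c₀ k : S K ℓ →+* S K ℓ) _ _ i).symm.trans ?_
  rw [updateCol_mulVec_of_eq_zero _ hvk, coeffMatrix_mulVec]
  rfl

lemma IsLocallyHeavy.restrict_definingPoly_dvd_adjugate (hlh : IsLocallyHeavy A m c₀)
    (hm : m c₀ ≠ 0) (hk : c₀ k ≠ 0) {θ : Fin ℓ → Der K ℓ} (hθ : ∀ i, IsLogDer A m (θ i))
    (g : Fin ℓ → S K ℓ) (i : Fin ℓ) :
    restrict c₀ k (definingPoly m (A.hyps.erase c₀)) ∣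
      (restrictedMatrix θ g c₀ k).adjugate k i := by
  refine restrict_definingPoly_dvd_of_forall_pencil hlh.1 fun c hc => ?_
  obtain ⟨l, hl⟩ := Function.ne_iff.mp (projCov_ne_zero (k := k) hlh.1 hc)
  rw [Matrix.adjugate_apply]
  refine dvd_det_of_forall_dvd_mulVec (isUnit_C_apply hl) fun i' => ?_
  rw [Matrix.updateRow_mulVec]
  rcases eq_or_ne i' i with rfl | hi
  · simp [projCov_apply_self hk]
  · have hzero : restrict c₀ k (θ i' (linForm c₀)) = 0 := by
      simpa [restrict_linForm_self hk, hm] using map_dvd (restrict c₀ k) (hθ i' c₀ hlh.1)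
    rw [Function.update_of_ne hi, restrictedMatrix_mulVec_projCov g hk hzero]
    exact hlh.restrict_definingPoly_pencil_dvd hk (hθ i') hc

lemma IsLocallyHeavy.exists_constantCoeff_ne_zero (hlh : IsLocallyHeavy A m c₀) (hm : m c₀ ≠ 0)
    {θ : Fin ℓ → Der K ℓ} (hb : IsDerBasis A m θ) {g : Fin ℓ → S K ℓ}
    (hg : ∀ i, θ i (linForm c₀) = linForm c₀ ^ m c₀ * g i) : ∃ j, constantCoeff (g j) ≠ 0 := by
  obtain ⟨k, hk⟩ := Function.ne_iff.mp (A.ne_zero c₀ hlh.1)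
  set q := restrict c₀ k (definingPoly m (A.hyps.erase c₀)) with hq_def
  have hq : q ≠ 0 := restrict_definingPoly_ne_zero hlh.1
  choose e he using hlh.restrict_definingPoly_dvd_adjugate hm hk hb.1 g
  have hdet : (restrictedMatrix θ g c₀ k).det = q * ∑ i, restrict c₀ k (g i) * e i := by
    rw [Matrix.det_eq_sum_mul_adjugate_col _ k, Finset.mul_sum]
    refine Finset.sum_congr rfl fun i _ => ?_
    rw [he, ← hq_def]
    simp [restrictedMatrix, mul_left_comm]
  have hunit : IsUnit (∑ i, restrict c₀ k (g i) * e i) :=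
    isUnit_of_associated_mul (hdet ▸ associated_det_restrictedMatrix hlh.1 hk hb hg) hq
  by_contra! h
  have := hunit.map (constantCoeff (R := K) (σ := Fin ℓ))
  simp [constantCoeff_restrict, h] at this

end Restriction

theorem stmt4 (A : Arrangement K ℓ) (m : (Fin ℓ → K) → ℕ)
    (hm : ∀ c ∈ A.hyps, 0 < m c) (c₀ : Fin ℓ → K) (hlh : IsLocallyHeavy A m c₀)
    (θ : Fin ℓ → Der K ℓ) (d : Fin ℓ → ℕ)
    (hhom : ∀ i, IsHomogOfDeg (θ i) (d i)) (hb : IsDerBasis A m θ) :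
    ∃ j, d j = m c₀ ∧ ∃ t : K, t ≠ 0 ∧
      θ j (linForm c₀) = MvPolynomial.C t * (linForm c₀) ^ (m c₀) := by
  choose g hg using fun i => hb.1 i c₀ hlh.1
  obtain ⟨j, hj⟩ := hlh.exists_constantCoeff_ne_zero (hm c₀ hlh.1).ne' hb hg
  have hpow : (linForm c₀ ^ m c₀).IsHomogeneous (m c₀) := by
    simpa using (isHomogeneous_linForm c₀).pow (m c₀)
  obtain ⟨hd, hmul⟩ := eq_and_mul_eq_C_mul_of_isHomogeneous hpow
    (pow_ne_zero _ (linForm_ne_zero (A.ne_zero c₀ hlh.1))) (hg j ▸ hhom j c₀) hj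
  exact ⟨j, hd, constantCoeff (g j), hj, (hg j).trans hmul⟩

end ArrPaper
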